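/- arXiv:1512.02876 — 5 statements merged into one kernel-verified Lean document; each statement's English description precedes it below -/
import Mathlib

section
/- Let M ≥ 1, let f₁, …, f_M be continuous complex-valued functions on the unit sphere of ℝ³, let a₁, …, a_M be integers, b₁, …, b_M natural numbers, and let R > 0. Define Φ(x) = Σ_{m=1}^M ‖x‖^{a_m} (log‖x‖)^{b_m} f_m(x/‖x‖) for x ∈ ℝ³ ∖ {0}. Then: (i) the near-zone integral N(B) = ∫_{0<‖x‖≤R} ‖x‖^B Φ(x) dx converges absolutely whenever Re(B) > max_m(−a_m − 3), and B ↦ N(B) extends to a holomorphic function g₋ on ℂ ∖ {−a_m − 3 : 1 ≤ m ≤ M}; (ii) the far-zone integral F(B) = ∫_{‖x‖≥R} ‖x‖^B Φ(x) dx converges absolutely whenever Re(B) < min_m(−a_m − 3), and extends to a holomorphic function g₊ on the same set; (iii) g₋(B) + g₊(B) = 0 for every B ∈ ℂ ∖ {−a_m − 3 : 1 ≤ m ≤ M}. -/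
/-!
In polar coordinates with logarithmic radius `t = log ‖x‖`, a multipolar term contributes the
integral of its angular function over the sphere times the one-dimensional integral of
`t ^ b * exp (s * t)`, where `s = B + a + d` and the dimension `d` comes from the Jacobian. The near
zone becomes `t ≤ log R` and the far zone `t ≥ log R`.

For `s ≠ 0` the function `t ^ b * exp (s * t)` has an elementary antiderivative, holomorphic in `s`,
which vanishes at `-∞` when `Re s > 0` and at `+∞` when `Re s < 0`. So its value at `log R` is the
near-zone integral on the first half-plane, and minus the far-zone integral on the second: one
function continues both, up to sign.
-/

open MeasureTheory Set

/-- The multipolar-structured function `Φ(x) = Σ_m ‖x‖^(a m) (log ‖x‖)^(b m) f_m (x/‖x‖)`. -/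
noncomputable def multipolarFun (M : ℕ) (f : Fin M → EuclideanSpace ℝ (Fin 3) → ℂ)
    (a : Fin M → ℤ) (b : Fin M → ℕ) (x : EuclideanSpace ℝ (Fin 3)) : ℂ :=
  ∑ m : Fin M, ((‖x‖ ^ (a m) : ℝ) : ℂ) * (Real.log ‖x‖ : ℂ) ^ (b m) * f m (‖x‖⁻¹ • x)

open Filter Topology Asymptotics Metric Module

/-! ### Integrals of `t ^ b * exp (s * t)` over half-lines -/

section PowMulExp

/-- The antiderivative in `t` of `t ^ b * exp (s * t)` obtained by integrating by parts `b` times: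
`exp (s * t)` times a polynomial in `t` and `s⁻¹`. At `s = 0` it takes the junk value `0`. -/
noncomputable def powMulExpPrimitive : ℕ → ℂ → ℝ → ℂ
  | 0, s, t => Complex.exp (s * t) / s
  | b + 1, s, t =>
    ((t : ℂ) ^ (b + 1) * Complex.exp (s * t) - (b + 1) * powMulExpPrimitive b s t) / s

lemma hasDerivAt_powMulExpPrimitive (b : ℕ) {s : ℂ} (hs : s ≠ 0) (t : ℝ) :
    HasDerivAt (powMulExpPrimitive b s) ((t : ℂ) ^ b * Complex.exp (s * t)) t := by
  have hid : HasDerivAt (fun t : ℝ => (t : ℂ)) 1 t := Complex.ofRealCLM.hasDerivAt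
  have hexp : HasDerivAt (fun t : ℝ => Complex.exp (s * t)) (Complex.exp (s * t) * (s * 1)) t :=
    (hid.const_mul s).cexp
  induction b with
  | zero =>
    refine (hexp.div_const s).congr_deriv ?_
    field_simp
  | succ b ih =>
    refine ((((hid.pow (b + 1)).mul hexp).sub (ih.const_mul ((b : ℂ) + 1))).div_const s).congr_deriv
      ?_
    simp only [Pi.pow_apply, Nat.add_sub_cancel]
    push_cast
    field_simp
    ring

lemma differentiableOn_powMulExpPrimitive (b : ℕ) (t : ℝ) :
    DifferentiableOn ℂ (fun s => powMulExpPrimitive b s t) {0}ᶜ := by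
  have hexp : DifferentiableOn ℂ (fun s : ℂ => Complex.exp (s * t)) {0}ᶜ := by fun_prop
  induction b with
  | zero => exact hexp.div differentiableOn_id fun s hs => hs
  | succ b ih =>
    exact ((hexp.const_mul _).sub (ih.const_mul _)).div differentiableOn_id fun s hs => hs

lemma tendsto_powMulExpPrimitive {l : Filter ℝ} {s : ℂ}
    (h : ∀ b : ℕ, Tendsto (fun t : ℝ => (t : ℂ) ^ b * Complex.exp (s * t)) l (𝓝 0)) (b : ℕ) :
    Tendsto (powMulExpPrimitive b s) l (𝓝 0) := by
  induction b with
  | zero => simpa [powMulExpPrimitive] using (h 0).div_const s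
  | succ b ih =>
    simpa [powMulExpPrimitive] using ((h (b + 1)).sub (ih.const_mul ((b : ℂ) + 1))).div_const s

-- Half of the exponential decay absorbs the power of `t`.
lemma isBigO_pow_mul_exp_atTop (b : ℕ) {s : ℂ} (hs : s.re < 0) :
    (fun t : ℝ => (t : ℂ) ^ b * Complex.exp (s * t)) =O[atTop]
      fun t => Real.exp (s.re / 2 * t) := by
  have hpow := (isLittleO_pow_exp_pos_mul_atTop b (b := -s.re / 2) (by linarith)).isBigO
  have hmul := hpow.mul (isBigO_refl (fun t => Real.exp (s.re * t)) atTop)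
  refine (isBigO_of_le (g := fun t : ℝ => t ^ b * Real.exp (s.re * t)) _
    fun t => ?_).trans (hmul.congr_right fun t => ?_)
  · simp [Complex.norm_exp]
  · rw [← Real.exp_add]
    ring_nf

lemma isBigO_pow_mul_exp_atBot (b : ℕ) {s : ℂ} (hs : 0 < s.re) :
    (fun t : ℝ => (t : ℂ) ^ b * Complex.exp (s * t)) =O[atBot]
      fun t => Real.exp (s.re / 2 * t) := by
  have hneg := (isBigO_pow_mul_exp_atTop b (s := -s) (by simpa)).comp_tendsto
    tendsto_neg_atBot_atTop
  refine (isBigO_of_le _ fun t => ?_).trans (hneg.congr_right fun t => ?_)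
  · simp
  · simp [neg_div]

lemma tendsto_pow_mul_exp_atTop (b : ℕ) {s : ℂ} (hs : s.re < 0) :
    Tendsto (fun t : ℝ => (t : ℂ) ^ b * Complex.exp (s * t)) atTop (𝓝 0) :=
  (isBigO_pow_mul_exp_atTop b hs).trans_tendsto <|
    Real.tendsto_exp_atBot.comp <| tendsto_id.const_mul_atTop_of_neg (by linarith)

lemma tendsto_pow_mul_exp_atBot (b : ℕ) {s : ℂ} (hs : 0 < s.re) :
    Tendsto (fun t : ℝ => (t : ℂ) ^ b * Complex.exp (s * t)) atBot (𝓝 0) :=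
  (isBigO_pow_mul_exp_atBot b hs).trans_tendsto <|
    Real.tendsto_exp_atBot.comp <| tendsto_id.const_mul_atBot (by linarith)

lemma locallyIntegrable_pow_mul_exp (b : ℕ) (s : ℂ) :
    LocallyIntegrable fun t : ℝ => (t : ℂ) ^ b * Complex.exp (s * t) :=
  Continuous.locallyIntegrable (by fun_prop)

lemma integrableOn_pow_mul_exp_Iic (b : ℕ) {s : ℂ} (hs : 0 < s.re) (c : ℝ) :
    IntegrableOn (fun t : ℝ => (t : ℂ) ^ b * Complex.exp (s * t)) (Iic c) :=
  ((locallyIntegrable_pow_mul_exp b s).locallyIntegrableOn _).integrableOn_of_isBigO_atBot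
    (isBigO_pow_mul_exp_atBot b hs)
    ⟨Iic 0, Iic_mem_atBot 0, integrableOn_exp_mul_Iic (by linarith) 0⟩

lemma integrableOn_pow_mul_exp_Ici (b : ℕ) {s : ℂ} (hs : s.re < 0) (c : ℝ) :
    IntegrableOn (fun t : ℝ => (t : ℂ) ^ b * Complex.exp (s * t)) (Ici c) :=
  ((locallyIntegrable_pow_mul_exp b s).locallyIntegrableOn _).integrableOn_of_isBigO_atTop
    (isBigO_pow_mul_exp_atTop b hs)
    ⟨Ioi 0, Ioi_mem_atTop 0, integrableOn_exp_mul_Ioi (by linarith) 0⟩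

lemma integral_pow_mul_exp_Iic (b : ℕ) {s : ℂ} (hs : 0 < s.re) (c : ℝ) :
    ∫ t in Iic c, (t : ℂ) ^ b * Complex.exp (s * t) = powMulExpPrimitive b s c := by
  have hs₀ : s ≠ 0 := by rintro rfl; simp at hs
  simpa using integral_Iic_of_hasDerivAt_of_tendsto'
    (fun t _ => hasDerivAt_powMulExpPrimitive b hs₀ t) (integrableOn_pow_mul_exp_Iic b hs c)
    (tendsto_powMulExpPrimitive (tendsto_pow_mul_exp_atBot · hs) b)

lemma integral_pow_mul_exp_Ici (b : ℕ) {s : ℂ} (hs : s.re < 0) (c : ℝ) :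
    ∫ t in Ici c, (t : ℂ) ^ b * Complex.exp (s * t) = -powMulExpPrimitive b s c := by
  have hs₀ : s ≠ 0 := by rintro rfl; simp at hs
  rw [integral_Ici_eq_integral_Ioi]
  simpa using integral_Ioi_of_hasDerivAt_of_tendsto'
    (fun t _ => hasDerivAt_powMulExpPrimitive b hs₀ t)
    ((integrableOn_pow_mul_exp_Ici b hs c).mono_set Ioi_subset_Ici_self)
    (tendsto_powMulExpPrimitive (tendsto_pow_mul_exp_atTop · hs) b)

end PowMulExp

/-! ### Polar coordinates with logarithmic radius -/

lemma measurableSet_image_exp {T : Set ℝ} (hT : MeasurableSet T) : MeasurableSet (Real.exp '' T) :=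
  Real.isOpenEmbedding_exp.measurableEmbedding.measurableSet_image.2 hT

lemma setOf_norm_le_eq_preimage_image_exp {E : Type*} [Norm E] {R : ℝ} (hR : 0 < R) :
    {x : E | 0 < ‖x‖ ∧ ‖x‖ ≤ R} = norm ⁻¹' (Real.exp '' Iic (Real.log R)) := by
  rw [Real.image_exp_Iic, Real.exp_log hR]
  rfl

lemma setOf_le_norm_eq_preimage_image_exp {E : Type*} [Norm E] {R : ℝ} (hR : 0 < R) :
    {x : E | R ≤ ‖x‖} = norm ⁻¹' (Real.exp '' Ici (Real.log R)) := by
  rw [Real.image_exp_Ici, Real.exp_log hR]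
  rfl

section RadialMeasure

variable {F : Type*} [NormedAddCommGroup F] [NormedSpace ℝ F]

lemma integrable_volumeIoiPow_iff (n : ℕ) (g : ℝ → F) :
    Integrable (fun r : Ioi (0 : ℝ) => g r) (Measure.volumeIoiPow n) ↔
      IntegrableOn (fun r => r ^ n • g r) (Ioi 0) := by
  rw [Measure.volumeIoiPow, integrable_withDensity_iff_integrable_smul' (by fun_prop) (by simp),
    integrableOn_iff_comap_subtypeVal measurableSet_Ioi]
  refine integrable_congr (.of_forall fun r => ?_)
  simp [ENNReal.toReal_ofReal (pow_nonneg r.2.out.le n)]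

lemma integral_volumeIoiPow (n : ℕ) (g : ℝ → F) :
    ∫ r : Ioi (0 : ℝ), g r ∂Measure.volumeIoiPow n = ∫ r in Ioi 0, r ^ n • g r := by
  rw [Measure.volumeIoiPow, integral_withDensity_eq_integral_toReal_smul (by fun_prop) (by simp),
    ← integral_subtype_comap measurableSet_Ioi]
  refine integral_congr_ae (.of_forall fun r => ?_)
  simp [ENNReal.toReal_ofReal (pow_nonneg r.2.out.le n)]

lemma abs_exp_smul_exp_pow_smul {d : ℕ} (hd : 0 < d) (g : ℝ → F) (t : ℝ) :
    |Real.exp t| • Real.exp t ^ (d - 1) • g (Real.exp t) = Real.exp (d * t) • g (Real.exp t) := by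
  rw [abs_of_pos (Real.exp_pos t), smul_smul, mul_pow_sub_one hd.ne', Real.exp_nat_mul]

lemma integrableOn_pow_smul_image_exp_iff {d : ℕ} (hd : 0 < d) {T : Set ℝ} (hT : MeasurableSet T)
    (g : ℝ → F) :
    IntegrableOn (fun r => r ^ (d - 1) • g r) (Real.exp '' T) ↔
      IntegrableOn (fun t => Real.exp (d * t) • g (Real.exp t)) T := by
  rw [integrableOn_image_iff_integrableOn_abs_deriv_smul hT
    (fun t _ => (Real.hasDerivAt_exp t).hasDerivWithinAt) Real.exp_injective.injOn]
  simp_rw [abs_exp_smul_exp_pow_smul hd]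

lemma integral_pow_smul_image_exp {d : ℕ} (hd : 0 < d) {T : Set ℝ} (hT : MeasurableSet T)
    (g : ℝ → F) :
    ∫ r in Real.exp '' T, r ^ (d - 1) • g r = ∫ t in T, Real.exp (d * t) • g (Real.exp t) := by
  rw [integral_image_eq_integral_abs_deriv_smul hT
    (fun t _ => (Real.hasDerivAt_exp t).hasDerivWithinAt) Real.exp_injective.injOn]
  simp_rw [abs_exp_smul_exp_pow_smul hd]

end RadialMeasure

section Polar

variable {E : Type*} [NormedAddCommGroup E] [NormedSpace ℝ E] [FiniteDimensional ℝ E]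
  [MeasurableSpace E] [BorelSpace E] (μ : Measure E) [μ.IsAddHaarMeasure]
  {F : Type*} [NormedAddCommGroup F]

lemma integrable_toSphere_of_continuousOn {k : E → F} (hk : ContinuousOn k (sphere 0 1)) :
    Integrable (fun σ : sphere (0 : E) 1 => k σ) μ.toSphere :=
  (continuousOn_iff_continuous_domRestrict.1 hk).integrable_of_hasCompactSupport
    (.of_compactSpace _)

variable [Nontrivial E] {𝕜 : Type*} [RCLike 𝕜] [NormedSpace 𝕜 F]

lemma integrable_norm_smul_direction {g : ℝ → 𝕜} {k : E → F}
    (hg : IntegrableOn (fun r => r ^ (finrank ℝ E - 1) • g r) (Ioi 0))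
    (hk : Integrable (fun σ : sphere (0 : E) 1 => k σ) μ.toSphere) :
    Integrable (fun x => g ‖x‖ • k (‖x‖⁻¹ • x)) μ := by
  have hprod := (((integrable_volumeIoiPow_iff _ g).2 hg).smul_prod hk).swap
  rw [← restrict_compl_singleton (μ := μ) 0, ← IntegrableOn,
    integrableOn_iff_comap_subtypeVal (measurableSet_singleton _).compl]
  simpa [Function.comp_def] using (μ.measurePreserving_homeomorphUnitSphereProd.integrable_comp_emb
    (homeomorphUnitSphereProd E).measurableEmbedding).2 hprod

lemma integrableOn_norm_smul_direction {T : Set ℝ} (hT : MeasurableSet T) {g : ℝ → 𝕜} {k : E → F}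
    (hg : IntegrableOn (fun t => Real.exp (finrank ℝ E * t) • g (Real.exp t)) T)
    (hk : Integrable (fun σ : sphere (0 : E) 1 => k σ) μ.toSphere) :
    IntegrableOn (fun x => g ‖x‖ • k (‖x‖⁻¹ • x)) (norm ⁻¹' (Real.exp '' T)) μ := by
  have hS := measurableSet_image_exp hT
  have hradial : IntegrableOn
      (fun r => r ^ (finrank ℝ E - 1) • (Real.exp '' T).indicator g r) (Ioi 0) := by
    rw [← indicator_smul]
    exact ((integrable_indicator_iff hS).2
      ((integrableOn_pow_smul_image_exp_iff finrank_pos hT g).2 hg)).integrableOn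
  rw [← integrable_indicator_iff (measurable_norm hS), indicator_smul_left]
  exact integrable_norm_smul_direction μ hradial hk

variable [NormedSpace ℝ F]

lemma integral_norm_smul_direction (g : ℝ → 𝕜) (k : E → F) :
    ∫ x, g ‖x‖ • k (‖x‖⁻¹ • x) ∂μ =
      (∫ r in Ioi 0, r ^ (finrank ℝ E - 1) • g r) • ∫ σ : sphere (0 : E) 1, k σ ∂μ.toSphere :=
  calc
    _ = ∫ x : ({0}ᶜ : Set E), g ‖x.1‖ • k (‖x.1‖⁻¹ • x.1) ∂μ.comap (↑) := by
      rw [integral_subtype_comap (measurableSet_singleton _).compl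
        fun x => g ‖x‖ • k (‖x‖⁻¹ • x), restrict_compl_singleton]
    _ = ∫ z, g z.2 • k z.1 ∂μ.toSphere.prod (.volumeIoiPow (finrank ℝ E - 1)) := by
      simpa using μ.measurePreserving_homeomorphUnitSphereProd.integral_comp
        (homeomorphUnitSphereProd E).measurableEmbedding fun z => g z.2 • k z.1
    _ = ∫ z, g z.1 • k z.2 ∂(Measure.volumeIoiPow (finrank ℝ E - 1)).prod μ.toSphere :=
      integral_prod_swap fun z : Ioi (0 : ℝ) × sphere (0 : E) 1 => g z.1 • k z.2
    _ = _ := by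
      rw [integral_prod_smul (fun r : Ioi (0 : ℝ) => g r) fun σ : sphere (0 : E) 1 => k σ,
        integral_volumeIoiPow]

lemma setIntegral_norm_smul_direction {T : Set ℝ} (hT : MeasurableSet T) (g : ℝ → 𝕜) (k : E → F) :
    ∫ x in norm ⁻¹' (Real.exp '' T), g ‖x‖ • k (‖x‖⁻¹ • x) ∂μ =
      (∫ t in T, Real.exp (finrank ℝ E * t) • g (Real.exp t)) •
        ∫ σ : sphere (0 : E) 1, k σ ∂μ.toSphere := by
  have hS := measurableSet_image_exp hT
  have hS₀ : Real.exp '' T ⊆ Ioi 0 := by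
    rintro _ ⟨t, -, rfl⟩
    exact Real.exp_pos t
  have hradial : ∫ r in Ioi 0, r ^ (finrank ℝ E - 1) • (Real.exp '' T).indicator g r =
      ∫ t in T, Real.exp (finrank ℝ E * t) • g (Real.exp t) := by
    rw [← indicator_smul, setIntegral_indicator hS, inter_eq_right.2 hS₀,
      integral_pow_smul_image_exp finrank_pos hT]
  rw [← integral_indicator (measurable_norm hS), indicator_smul_left, ← hradial]
  exact integral_norm_smul_direction μ ((Real.exp '' T).indicator g) k

end Polar

/-! ### Zone integrals of multipolar sums -/

section Multipolar

/-- The radial factor `r ^ a * (log r) ^ b` of a multipolar term. -/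
noncomputable def powMulLogPow (a : ℂ) (b : ℕ) (r : ℝ) : ℂ :=
  (r : ℂ) ^ a * (Real.log r : ℂ) ^ b

-- The factors `r ^ B` and `r ^ a` and the Jacobian combine into one exponential.
lemma exp_smul_powMulLogPow_exp (d : ℕ) (B a : ℂ) (b : ℕ) (t : ℝ) :
    Real.exp (d * t) •
        (Complex.exp (B * Real.log (Real.exp t)) * powMulLogPow a b (Real.exp t)) =
      (t : ℂ) ^ b * Complex.exp ((B + a + d) * t) := by
  have hcpow : (Real.exp t : ℂ) ^ a = Complex.exp (a * t) := by
    rw [Complex.cpow_def_of_ne_zero (mod_cast (Real.exp_pos t).ne'), ← Complex.ofReal_log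
      (Real.exp_pos t).le, Real.log_exp, mul_comm]
  rw [powMulLogPow, hcpow, Real.log_exp, Complex.real_smul, add_mul, add_mul, Complex.exp_add,
    Complex.exp_add]
  push_cast
  ring

variable {ι E F : Type*} [Fintype ι] [NormedAddCommGroup E] [NormedSpace ℝ E]
  [NormedAddCommGroup F] [NormedSpace ℂ F]

/-- The multipolar sum `Σ_m ‖x‖ ^ a_m * (log ‖x‖) ^ b_m • f_m (x / ‖x‖)`, with vector values and
complex exponents. Only the values of `f_m` on the unit sphere matter away from the origin. -/
noncomputable def multipolarSum (f : ι → E → F) (a : ι → ℂ) (b : ι → ℕ) (x : E) : F :=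
  ∑ m, powMulLogPow (a m) (b m) ‖x‖ • f m (‖x‖⁻¹ • x)

lemma exp_smul_multipolarSum (f : ι → E → F) (a : ι → ℂ) (b : ι → ℕ) (B : ℂ) (x : E) :
    Complex.exp (B * Real.log ‖x‖) • multipolarSum f a b x =
      ∑ m, (Complex.exp (B * Real.log ‖x‖) * powMulLogPow (a m) (b m) ‖x‖) •
        f m (‖x‖⁻¹ • x) := by
  simp_rw [multipolarSum, Finset.smul_sum, smul_smul]

lemma multipolarFun_eq_multipolarSum (M : ℕ) (f : Fin M → EuclideanSpace ℝ (Fin 3) → ℂ)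
    (a : Fin M → ℤ) (b : Fin M → ℕ) :
    multipolarFun M f a b = multipolarSum f (fun m => (a m : ℂ)) b := by
  ext x
  simp [multipolarFun, multipolarSum, powMulLogPow]

variable [MeasurableSpace E] (μ : Measure E)

/-- The common analytic continuation, up to sign, of the near-zone and far-zone integrals of a
multipolar sum: the antiderivatives of its terms in the variable `log ‖x‖`, evaluated at `c = log R`
and weighted by the integrals of the angular functions. -/
noncomputable def multipolarContinuation (f : ι → E → F) (a : ι → ℂ) (b : ι → ℕ) (c : ℝ)
    (B : ℂ) : F :=
  ∑ m, powMulExpPrimitive (b m) (B + a m + finrank ℝ E) c •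
    ∫ σ : sphere (0 : E) 1, f m σ ∂μ.toSphere

lemma differentiableOn_multipolarContinuation (f : ι → E → F) (a : ι → ℂ) (b : ι → ℕ) (c : ℝ) :
    DifferentiableOn ℂ (multipolarContinuation μ f a b c)
      {B | ∀ m, B ≠ -a m - finrank ℝ E} := by
  refine DifferentiableOn.fun_sum fun m _ => DifferentiableOn.smul_const ?_ _
  refine (differentiableOn_powMulExpPrimitive (b m) c).comp
    (f := fun B : ℂ => B + a m + finrank ℝ E) (by fun_prop)
    fun B hB (hzero : B + a m + finrank ℝ E = 0) => hB m ?_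
  linear_combination hzero

variable [Nontrivial E] [FiniteDimensional ℝ E] [BorelSpace E] [μ.IsAddHaarMeasure]
  {T : Set ℝ} {B : ℂ}

lemma integrableOn_powMulLogPow_smul_direction {k : E → F}
    (hk : Integrable (fun σ : sphere (0 : E) 1 => k σ) μ.toSphere) {a : ℂ} {b : ℕ}
    (hT : MeasurableSet T)
    (hint : IntegrableOn (fun t : ℝ => (t : ℂ) ^ b * Complex.exp ((B + a + finrank ℝ E) * t)) T) :
    IntegrableOn (fun x => (Complex.exp (B * Real.log ‖x‖) * powMulLogPow a b ‖x‖) •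
      k (‖x‖⁻¹ • x)) (norm ⁻¹' (Real.exp '' T)) μ :=
  integrableOn_norm_smul_direction μ hT
    (g := fun r => Complex.exp (B * Real.log r) * powMulLogPow a b r)
    (by simpa only [exp_smul_powMulLogPow_exp] using hint) hk

lemma integral_powMulLogPow_smul_direction (hT : MeasurableSet T) (a : ℂ) (b : ℕ) (k : E → F) :
    ∫ x in norm ⁻¹' (Real.exp '' T),
        (Complex.exp (B * Real.log ‖x‖) * powMulLogPow a b ‖x‖) • k (‖x‖⁻¹ • x) ∂μ =
      (∫ t in T, (t : ℂ) ^ b * Complex.exp ((B + a + finrank ℝ E) * t)) •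
        ∫ σ : sphere (0 : E) 1, k σ ∂μ.toSphere := by
  simp_rw [← exp_smul_powMulLogPow_exp]
  exact setIntegral_norm_smul_direction μ hT
    (fun r => Complex.exp (B * Real.log r) * powMulLogPow a b r) k

variable {f : ι → E → F} {a : ι → ℂ} {b : ι → ℕ}

lemma integrableOn_exp_smul_multipolarSum
    (hf : ∀ m, Integrable (fun σ : sphere (0 : E) 1 => f m σ) μ.toSphere)
    (hT : MeasurableSet T)
    (hint : ∀ m, IntegrableOn
      (fun t : ℝ => (t : ℂ) ^ b m * Complex.exp ((B + a m + finrank ℝ E) * t)) T) :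
    IntegrableOn (fun x => Complex.exp (B * Real.log ‖x‖) • multipolarSum f a b x)
      (norm ⁻¹' (Real.exp '' T)) μ := by
  simp_rw [exp_smul_multipolarSum]
  exact integrable_finsetSum _ fun m _ =>
    integrableOn_powMulLogPow_smul_direction μ (hf m) hT (hint m)

lemma integral_exp_smul_multipolarSum
    (hf : ∀ m, Integrable (fun σ : sphere (0 : E) 1 => f m σ) μ.toSphere)
    (hT : MeasurableSet T)
    (hint : ∀ m, IntegrableOn
      (fun t : ℝ => (t : ℂ) ^ b m * Complex.exp ((B + a m + finrank ℝ E) * t)) T) :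
    ∫ x in norm ⁻¹' (Real.exp '' T), Complex.exp (B * Real.log ‖x‖) • multipolarSum f a b x ∂μ =
      ∑ m, (∫ t in T, (t : ℂ) ^ b m * Complex.exp ((B + a m + finrank ℝ E) * t)) •
        ∫ σ : sphere (0 : E) 1, f m σ ∂μ.toSphere := by
  simp_rw [exp_smul_multipolarSum]
  rw [integral_finsetSum _ fun m _ =>
    integrableOn_powMulLogPow_smul_direction μ (hf m) hT (hint m)]
  simp_rw [integral_powMulLogPow_smul_direction μ hT]

variable {R : ℝ}

lemma integrableOn_and_integral_eq_near_zone
    (hf : ∀ m, Integrable (fun σ : sphere (0 : E) 1 => f m σ) μ.toSphere) (hR : 0 < R)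
    (hB : ∀ m, -(a m).re - finrank ℝ E < B.re) :
    IntegrableOn (fun x => Complex.exp (B * Real.log ‖x‖) • multipolarSum f a b x)
        {x : E | 0 < ‖x‖ ∧ ‖x‖ ≤ R} μ ∧
      ∫ x in {x : E | 0 < ‖x‖ ∧ ‖x‖ ≤ R},
          Complex.exp (B * Real.log ‖x‖) • multipolarSum f a b x ∂μ =
        multipolarContinuation μ f a b (Real.log R) B := by
  have hre m : 0 < (B + a m + finrank ℝ E).re := by
    simp only [Complex.add_re, Complex.natCast_re]
    linarith [hB m]
  have hint m := integrableOn_pow_mul_exp_Iic (b m) (hre m) (Real.log R)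
  rw [setOf_norm_le_eq_preimage_image_exp hR]
  refine ⟨integrableOn_exp_smul_multipolarSum μ hf measurableSet_Iic hint, ?_⟩
  rw [integral_exp_smul_multipolarSum μ hf measurableSet_Iic hint, multipolarContinuation]
  simp_rw [integral_pow_mul_exp_Iic _ (hre _)]

lemma integrableOn_and_integral_eq_far_zone
    (hf : ∀ m, Integrable (fun σ : sphere (0 : E) 1 => f m σ) μ.toSphere) (hR : 0 < R)
    (hB : ∀ m, B.re < -(a m).re - finrank ℝ E) :
    IntegrableOn (fun x => Complex.exp (B * Real.log ‖x‖) • multipolarSum f a b x)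
        {x : E | R ≤ ‖x‖} μ ∧
      ∫ x in {x : E | R ≤ ‖x‖}, Complex.exp (B * Real.log ‖x‖) • multipolarSum f a b x ∂μ =
        -multipolarContinuation μ f a b (Real.log R) B := by
  have hre m : (B + a m + finrank ℝ E).re < 0 := by
    simp only [Complex.add_re, Complex.natCast_re]
    linarith [hB m]
  have hint m := integrableOn_pow_mul_exp_Ici (b m) (hre m) (Real.log R)
  rw [setOf_le_norm_eq_preimage_image_exp hR]
  refine ⟨integrableOn_exp_smul_multipolarSum μ hf measurableSet_Ici hint, ?_⟩
  rw [integral_exp_smul_multipolarSum μ hf measurableSet_Ici hint, multipolarContinuation]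
  simp_rw [integral_pow_mul_exp_Ici _ (hre _), neg_smul, Finset.sum_neg_distrib]

theorem near_far_analytic_continuation_cancel_general [CompleteSpace F]
    (hf : ∀ m, Integrable (fun σ : sphere (0 : E) 1 => f m σ) μ.toSphere)
    (a : ι → ℂ) (b : ι → ℕ) (hR : 0 < R) :
    ∃ gneg gpos : ℂ → F,
      DifferentiableOn ℂ gneg {B : ℂ | ∀ m, B ≠ -a m - finrank ℝ E} ∧
      DifferentiableOn ℂ gpos {B : ℂ | ∀ m, B ≠ -a m - finrank ℝ E} ∧
      (∀ B : ℂ, (∀ m, -(a m).re - finrank ℝ E < B.re) →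
        IntegrableOn (fun x => Complex.exp (B * Real.log ‖x‖) • multipolarSum f a b x)
          {x : E | 0 < ‖x‖ ∧ ‖x‖ ≤ R} μ ∧
        ∫ x in {x : E | 0 < ‖x‖ ∧ ‖x‖ ≤ R},
          Complex.exp (B * Real.log ‖x‖) • multipolarSum f a b x ∂μ = gneg B) ∧
      (∀ B : ℂ, (∀ m, B.re < -(a m).re - finrank ℝ E) →
        IntegrableOn (fun x => Complex.exp (B * Real.log ‖x‖) • multipolarSum f a b x)
          {x : E | R ≤ ‖x‖} μ ∧
        ∫ x in {x : E | R ≤ ‖x‖},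
          Complex.exp (B * Real.log ‖x‖) • multipolarSum f a b x ∂μ = gpos B) ∧
      (∀ B : ℂ, (∀ m, B ≠ -a m - finrank ℝ E) → gneg B + gpos B = 0) :=
  have hg := differentiableOn_multipolarContinuation μ f a b (Real.log R)
  ⟨multipolarContinuation μ f a b (Real.log R), -multipolarContinuation μ f a b (Real.log R),
    hg, hg.neg, fun _ => integrableOn_and_integral_eq_near_zone μ hf hR,
    fun _ => integrableOn_and_integral_eq_far_zone μ hf hR,
    fun _ _ => add_neg_cancel _⟩

end Multipolar

/-- The near-zone and far-zone `B`-regularized integrals of a multipolar-structured function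
converge on the half-planes `Re B > max_m (-a_m - 3)` and `Re B < min_m (-a_m - 3)`
respectively, both extend holomorphically to `ℂ ∖ {-a_m - 3}`, and the two analytic
continuations cancel exactly. -/
theorem near_far_analytic_continuation_cancel
    (M : ℕ) (hM : 1 ≤ M) (f : Fin M → EuclideanSpace ℝ (Fin 3) → ℂ)
    (hf : ∀ m, ContinuousOn (f m) (Metric.sphere (0 : EuclideanSpace ℝ (Fin 3)) 1))
    (a : Fin M → ℤ) (b : Fin M → ℕ) (R : ℝ) (hR : 0 < R) :
    ∃ gneg gpos : ℂ → ℂ,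
      DifferentiableOn ℂ gneg {B : ℂ | ∀ m, B ≠ -(a m : ℂ) - 3} ∧
      DifferentiableOn ℂ gpos {B : ℂ | ∀ m, B ≠ -(a m : ℂ) - 3} ∧
      (∀ B : ℂ, (∀ m, -(a m : ℝ) - 3 < B.re) →
        IntegrableOn
          (fun x => Complex.exp (B * (Real.log ‖x‖ : ℂ)) * multipolarFun M f a b x)
          {x : EuclideanSpace ℝ (Fin 3) | 0 < ‖x‖ ∧ ‖x‖ ≤ R} volume ∧
        ∫ x in {x : EuclideanSpace ℝ (Fin 3) | 0 < ‖x‖ ∧ ‖x‖ ≤ R},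
            Complex.exp (B * (Real.log ‖x‖ : ℂ)) * multipolarFun M f a b x = gneg B) ∧
      (∀ B : ℂ, (∀ m, B.re < -(a m : ℝ) - 3) →
        IntegrableOn
          (fun x => Complex.exp (B * (Real.log ‖x‖ : ℂ)) * multipolarFun M f a b x)
          {x : EuclideanSpace ℝ (Fin 3) | R ≤ ‖x‖} volume ∧
        ∫ x in {x : EuclideanSpace ℝ (Fin 3) | R ≤ ‖x‖},
            Complex.exp (B * (Real.log ‖x‖ : ℂ)) * multipolarFun M f a b x = gpos B) ∧
      (∀ B : ℂ, (∀ m, B ≠ -(a m : ℂ) - 3) → gneg B + gpos B = 0) := by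
  have hf' m := integrable_toSphere_of_continuousOn volume (hf m)
  simpa [multipolarFun_eq_multipolarSum] using
    near_far_analytic_continuation_cancel_general volume hf' (fun m => (a m : ℂ)) b hR
end

section
/- Let f : ℝ → ℝ be smooth with compact support, let τ₀ > 0 and t ∈ ℝ. Then the limit lim_{η→0⁺} [ ∫_η^∞ (f(t−τ) + f(t+τ))/τ dτ + 2 f(t) log(η/τ₀) ] exists and equals ∫₀^∞ log(τ/τ₀) (f′(t−τ) − f′(t+τ)) dτ. -/
open MeasureTheory Set Filter

/-!
Fold the two halves of the line into `g τ = f (t - τ) + f (t + τ)`, a `C¹` function with compact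
support. Integrating `log (τ / τ₀) • g' τ` by parts on `(η, ∞)` gives
`∫_η^∞ τ⁻¹ • g τ dτ + log (η / τ₀) • g η = -∫_η^∞ log (τ / τ₀) • g' τ dτ`.
Since `log` is locally integrable, the right-hand side converges as `η → 0⁺`; replacing `g η` by
`g 0 = 2 f t` on the left costs only `O(η log η)`.
-/

open scoped Topology

lemma hasCompactSupport_comp_const_sub_add_comp_const_add {G M : Type*} [AddGroup G]
    [TopologicalSpace G] [IsTopologicalAddGroup G] [AddZeroClass M] {f : G → M}
    (hf : HasCompactSupport f) (t : G) : HasCompactSupport fun x => f (t - x) + f (t + x) :=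
  (hf.comp_homeomorph (Homeomorph.subLeft t)).add (hf.comp_homeomorph (Homeomorph.addLeft t))

lemma deriv_comp_const_sub_add_comp_const_add {𝕜 F : Type*} [NontriviallyNormedField 𝕜]
    [NormedAddCommGroup F] [NormedSpace 𝕜 F] {f : 𝕜 → F} (hf : Differentiable 𝕜 f) (t x : 𝕜) :
    deriv (fun y => f (t - y) + f (t + y)) x = -(deriv f (t - x) - deriv f (t + x)) := by
  rw [deriv_fun_add (by fun_prop) (by fun_prop), deriv_comp_const_sub, deriv_comp_const_add]
  abel

lemma locallyIntegrable_of_forall_intervalIntegrable {E : Type*} [NormedAddCommGroup E]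
    {μ : Measure ℝ} {φ : ℝ → E} (hφ : ∀ a b, IntervalIntegrable φ μ a b) :
    LocallyIntegrable φ μ := fun x =>
  ⟨Ioc (x - 1) (x + 1), Ioc_mem_nhds (by linarith) (by linarith), (hφ _ _).1⟩

lemma locallyIntegrable_log_div (c : ℝ) : LocallyIntegrable fun x : ℝ => Real.log (x / c) :=
  locallyIntegrable_of_forall_intervalIntegrable fun _ _ =>
    MeromorphicOn.intervalIntegrable_log (f := fun x => x / c) fun _ _ => by fun_prop

lemma hasDerivAt_log_div {c x : ℝ} (hc : c ≠ 0) (hx : x ≠ 0) :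
    HasDerivAt (fun y => Real.log (y / c)) x⁻¹ x := by
  convert ((hasDerivAt_id' x).div_const c).log (div_ne_zero hx hc) using 1
  field_simp

lemma tendsto_mul_log_div_zero {c : ℝ} (hc : c ≠ 0) :
    Tendsto (fun x : ℝ => x * Real.log (x / c)) (𝓝 0) (𝓝 0) := by
  have hcont : Continuous fun x : ℝ => c * (x / c * Real.log (x / c)) :=
    (Real.continuous_mul_log.comp (continuous_id.div_const c)).const_mul c
  simpa only [← mul_assoc, mul_div_cancel₀ _ hc, zero_mul] using hcont.tendsto 0

section VectorValued

variable {E : Type*} [NormedAddCommGroup E] [NormedSpace ℝ E] {g : ℝ → E} {c η : ℝ}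

lemma integrableOn_Ioi_inv_smul (hη : 0 < η) (hg : IntegrableOn g (Ioi η)) :
    IntegrableOn (fun x => x⁻¹ • g x) (Ioi η) := by
  refine Integrable.bdd_smul hg η⁻¹ measurable_inv.aestronglyMeasurable ?_
  filter_upwards [ae_restrict_mem measurableSet_Ioi] with x (hx : η < x)
  rw [Real.norm_of_nonneg (inv_nonneg.2 (hη.trans hx).le)]
  exact inv_anti₀ hη hx.le

lemma integrable_log_div_smul (hg : Continuous g) (hsupp : HasCompactSupport g) (c : ℝ) :
    Integrable fun x => Real.log (x / c) • g x :=
  (locallyIntegrable_log_div c).integrable_smul_right_of_hasCompactSupport hg hsupp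

lemma tendsto_log_div_smul_sub_zero (hg : DifferentiableAt ℝ g 0) (hc : c ≠ 0) :
    Tendsto (fun x => Real.log (x / c) • (g x - g 0)) (𝓝 0) (𝓝 0) := by
  have hO : (fun x => g x - g 0) =O[𝓝 0] fun x => x := by simpa using hg.isBigO_sub
  refine ((Asymptotics.isBigO_refl _ _).smul hO).trans_tendsto ?_
  simpa only [smul_eq_mul, mul_comm] using tendsto_mul_log_div_zero hc

lemma integral_Ioi_inv_smul_add_log_div_smul [CompleteSpace E] (hg : ContDiff ℝ 1 g)
    (hsupp : HasCompactSupport g) (hc : c ≠ 0) (hη : 0 < η) :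
    (∫ x in Ioi η, x⁻¹ • g x) + Real.log (η / c) • g η =
      -∫ x in Ioi η, Real.log (x / c) • deriv g x := by
  have hderiv (x : ℝ) (hx : x ∈ Ici η) : HasDerivAt (fun y => Real.log (y / c) • g y)
      (Real.log (x / c) • deriv g x + x⁻¹ • g x) x :=
    (hasDerivAt_log_div hc (hη.trans_le hx).ne').smul
      (hg.differentiable one_ne_zero x).hasDerivAt
  have hlog : IntegrableOn (fun x => Real.log (x / c) • deriv g x) (Ioi η) :=
    (integrable_log_div_smul (hg.continuous_deriv le_rfl) hsupp.deriv c).integrableOn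
  have hinv : IntegrableOn (fun x => x⁻¹ • g x) (Ioi η) :=
    integrableOn_Ioi_inv_smul hη
      (hg.continuous.integrable_of_hasCompactSupport hsupp).integrableOn
  have hzero : Tendsto (fun x => Real.log (x / c) • g x) atTop (𝓝 0) :=
    (hsupp.smul_left (f := fun x => Real.log (x / c))).is_zero_at_infty.mono_left
      atTop_le_cocompact
  have hparts := integral_Ioi_of_hasDerivAt_of_tendsto' hderiv (hlog.add hinv) hzero
  rw [integral_add hlog hinv, zero_sub] at hparts
  rw [eq_neg_iff_add_eq_zero, add_right_comm, add_comm (∫ x in Ioi η, x⁻¹ • g x), hparts,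
    neg_add_cancel]

theorem tendsto_integral_Ioi_inv_smul_add_log_div_smul [CompleteSpace E] (hg : ContDiff ℝ 1 g)
    (hsupp : HasCompactSupport g) (hc : c ≠ 0) :
    Tendsto (fun η => (∫ x in Ioi η, x⁻¹ • g x) + Real.log (η / c) • g 0) (𝓝[>] 0)
      (𝓝 (-∫ x in Ioi 0, Real.log (x / c) • deriv g x)) := by
  have hint : Integrable fun x => Real.log (x / c) • deriv g x :=
    integrable_log_div_smul (hg.continuous_deriv le_rfl) hsupp.deriv c
  have hmain : Tendsto (fun η => ∫ x in Ioi η, Real.log (x / c) • deriv g x) (𝓝[>] 0)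
      (𝓝 (∫ x in Ioi 0, Real.log (x / c) • deriv g x)) :=
    hint.integrableOn.continuousWithinAt_Ici_primitive_Ioi.mono_left
      (nhdsWithin_mono 0 Ioi_subset_Ici_self)
  have hboundary : Tendsto (fun η => Real.log (η / c) • (g η - g 0)) (𝓝[>] 0) (𝓝 0) :=
    (tendsto_log_div_smul_sub_zero (hg.differentiable one_ne_zero 0) hc).mono_left
      nhdsWithin_le_nhds
  rw [← sub_zero (-∫ x in Ioi 0, Real.log (x / c) • deriv g x)]
  refine (hmain.neg.sub hboundary).congr' ?_
  filter_upwards [self_mem_nhdsWithin] with η hη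
  rw [← integral_Ioi_inv_smul_add_log_div_smul hg hsupp hc hη, smul_sub]
  abel

theorem hadamard_partie_finie_cutoff_eq_log_kernel_general [CompleteSpace E] {f : ℝ → E}
    (hf : ContDiff ℝ 1 f) (hsupp : HasCompactSupport f) {τ₀ : ℝ} (hτ₀ : 0 < τ₀) (t : ℝ) :
    Tendsto
      (fun η => (∫ τ in Ioi η, τ⁻¹ • (f (t - τ) + f (t + τ))) + (2 * Real.log (η / τ₀)) • f t)
      (𝓝[>] 0)
      (𝓝 (∫ τ in Ioi 0, Real.log (τ / τ₀) • (deriv f (t - τ) - deriv f (t + τ)))) := by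
  have hfold := tendsto_integral_Ioi_inv_smul_add_log_div_smul
    (g := fun τ => f (t - τ) + f (t + τ)) (by fun_prop)
    (hasCompactSupport_comp_const_sub_add_comp_const_add hsupp t) hτ₀.ne'
  simpa only [deriv_comp_const_sub_add_comp_const_add (hf.differentiable one_ne_zero), smul_neg,
    integral_neg, neg_neg, sub_zero, add_zero, ← two_smul ℝ (f t), smul_smul, mul_comm] using hfold

end VectorValued

/-- The cutoff (subtracted-limit) definition of the Hadamard partie finie of
`∫ f(t')/|t-t'| dt'` agrees with the log-kernel definition
`∫₀^∞ log(τ/τ₀) (f'(t-τ) - f'(t+τ)) dτ`. -/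
theorem hadamard_partie_finie_cutoff_eq_log_kernel
    (f : ℝ → ℝ) (hf : ContDiff ℝ (⊤ : ℕ∞) f) (hsupp : HasCompactSupport f)
    (τ₀ : ℝ) (hτ₀ : 0 < τ₀) (t : ℝ) :
    Tendsto
      (fun η : ℝ =>
        (∫ τ in Ioi η, (f (t - τ) + f (t + τ)) / τ) + 2 * f t * Real.log (η / τ₀))
      (nhdsWithin 0 (Ioi 0))
      (nhds (∫ τ in Ioi (0 : ℝ),
        Real.log (τ / τ₀) * (deriv f (t - τ) - deriv f (t + τ)))) := by
  simpa only [smul_eq_mul, div_eq_inv_mul, mul_right_comm] using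
    hadamard_partie_finie_cutoff_eq_log_kernel_general (hf.of_le (by simp)) hsupp hτ₀ t
end

section
/- Let f : ℝ → ℝ be smooth with compact support and τ₀ > 0. Then ∫_ℝ ∫₀^∞ f(t) log(τ/τ₀) (f⁽⁷⁾(t−τ) + f⁽⁷⁾(t+τ)) dτ dt = 0; equivalently, the retarded-only tail double integral equals its time-symmetrized form: ∫_ℝ f(t) ∫₀^∞ log(τ/τ₀) f⁽⁷⁾(t−τ) dτ dt = (1/2) ∫_ℝ f(t) ∫₀^∞ log(τ/τ₀) (f⁽⁷⁾(t−τ) − f⁽⁷⁾(t+τ)) dτ dt. -/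
open MeasureTheory Set

/-!
For a fixed delay `τ`, integrating by parts `n` times and translating `t` shows that the advanced
correlation `∫ f(t) f⁽ⁿ⁾(t + τ) dt` is `(-1)ⁿ` times the retarded one `∫ f(t) f⁽ⁿ⁾(t - τ) dt`, so
for odd `n` the two cancel, whatever the weight `k(τ)` given to the delay. Compact support bounds
both `t` and `t ± τ`, hence also `τ`; local integrability of `k` is therefore enough for Fubini,
which carries the cancellation over to the double integral. The logarithm is locally integrable.
-/

section IteratedDeriv

lemma hasCompactSupport_iteratedDeriv {𝕜 E : Type*} [NontriviallyNormedField 𝕜]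
    [NormedAddCommGroup E] [NormedSpace 𝕜 E] {f : 𝕜 → E} (hf : HasCompactSupport f) (n : ℕ) :
    HasCompactSupport (iteratedDeriv n f) :=
  (hf.iteratedFDeriv (𝕜 := 𝕜) n).comp_left
    (map_zero (ContinuousMultilinearMap.piFieldEquiv 𝕜 (Fin n) E).symm)

variable {A : Type*} [NormedRing A] [NormedAlgebra ℝ A]

lemma integral_mul_deriv_eq_neg_of_hasCompactSupport {u v : ℝ → A} (hu : ContDiff ℝ 1 u)
    (hv : ContDiff ℝ 1 v) (hcu : HasCompactSupport u) :
    ∫ t, u t * deriv v t = -∫ t, deriv u t * v t := by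
  have hu' : Continuous (deriv u) := hu.continuous_deriv_one
  have hv' : Continuous (deriv v) := hv.continuous_deriv_one
  refine integral_mul_deriv_eq_deriv_mul_of_integrable
    (fun x _ => (hu.differentiable one_ne_zero x).hasDerivAt)
    (fun x _ => (hv.differentiable one_ne_zero x).hasDerivAt) ?_ ?_ ?_
  · exact (hu.continuous.mul hv').integrable_of_hasCompactSupport hcu.mul_right
  · exact (hu'.mul hv.continuous).integrable_of_hasCompactSupport hcu.deriv.mul_right
  · exact (hu.continuous.mul hv.continuous).integrable_of_hasCompactSupport hcu.mul_right

lemma integral_mul_iteratedDeriv {n : ℕ} {u v : ℝ → A} (hu : ContDiff ℝ n u)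
    (hv : ContDiff ℝ n v) (hcu : HasCompactSupport u) :
    ∫ t, u t * iteratedDeriv n v t = (-1) ^ n * ∫ t, iteratedDeriv n u t * v t := by
  induction n generalizing v with
  | zero => simp
  | succ n ih =>
    have hu_n : ContDiff ℝ 1 (iteratedDeriv n u) := by
      rw [iteratedDeriv_eq_iterate]
      exact ContDiff.iterate_deriv' 1 n (by rwa [add_comm])
    have hv_one : ContDiff ℝ 1 v := hv.of_le (by norm_cast; lia)
    have hv' : ContDiff ℝ n (deriv v) := (contDiff_succ_iff_deriv.1 hv).2.2
    calc ∫ t, u t * iteratedDeriv (n + 1) v t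
        = (-1) ^ n * ∫ t, iteratedDeriv n u t * deriv v t := by
          rw [iteratedDeriv_succ', ih (hu.of_le (by norm_cast; lia)) hv']
      _ = (-1) ^ (n + 1) * ∫ t, iteratedDeriv (n + 1) u t * v t := by
          rw [integral_mul_deriv_eq_neg_of_hasCompactSupport hu_n hv_one
            (hasCompactSupport_iteratedDeriv hcu n), iteratedDeriv_succ, pow_succ]
          simp

lemma integral_mul_iteratedDeriv_add {n : ℕ} {u v : ℝ → A} (hu : ContDiff ℝ n u)
    (hv : ContDiff ℝ n v) (hcu : HasCompactSupport u) (τ : ℝ) :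
    ∫ t, u t * iteratedDeriv n v (t + τ) =
      (-1) ^ n * ∫ t, iteratedDeriv n u (t - τ) * v t := by
  have hparts := integral_mul_iteratedDeriv hu (hv.comp (contDiff_id.add contDiff_const)) hcu
    (v := fun t => v (t + τ))
  rw [iteratedDeriv_comp_add_const] at hparts
  rw [hparts, ← integral_add_right_eq_self (fun t => iteratedDeriv n u (t - τ) * v t) τ]
  simp only [add_sub_cancel_right]

end IteratedDeriv

section LocallyIntegrable

lemma locallyIntegrable_of_intervalIntegrable {E : Type*} [NormedAddCommGroup E] {f : ℝ → E}
    {μ : Measure ℝ} (hf : ∀ a b, IntervalIntegrable f μ a b) : LocallyIntegrable f μ :=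
  fun x => ⟨Ioc (x - 1) (x + 1), Ioc_mem_nhds (by simp) (by simp), (hf _ _).1⟩

lemma locallyIntegrable_log_comp {f : ℝ → ℝ} (hf : Meromorphic f) :
    LocallyIntegrable fun x => Real.log (f x) :=
  locallyIntegrable_of_intervalIntegrable fun _ _ => hf.meromorphicOn.intervalIntegrable_log

lemma locallyIntegrable_comp_snd {X Y E : Type*} [TopologicalSpace X] [MeasurableSpace X]
    [TopologicalSpace Y] [MeasurableSpace Y] [NormedAddCommGroup E] {μ : Measure X}
    [IsLocallyFiniteMeasure μ] [SFinite μ] {ν : Measure Y} [SFinite ν] {k : Y → E}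
    (hk : LocallyIntegrable k ν) :
    LocallyIntegrable (fun p : X × Y => k p.2) (μ.prod ν) := by
  rintro ⟨x, y⟩
  obtain ⟨U, hU, hμU⟩ := μ.finiteAt_nhds x
  obtain ⟨V, hV, hkV⟩ := hk y
  have : IsFiniteMeasure (μ.restrict U) := isFiniteMeasure_restrict.2 hμU.ne
  refine ⟨U ×ˢ V, prod_mem_nhds hU hV, ?_⟩
  rw [IntegrableOn, ← Measure.prod_restrict]
  exact hkV.integrable.comp_snd (μ.restrict U)

end LocallyIntegrable

section Fubini

lemma hasCompactSupport_mul_prod {X Y R : Type*} [TopologicalSpace X] [TopologicalSpace Y]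
    [MulZeroClass R] {f : X → R} {g : Y → R} (hf : HasCompactSupport f)
    (hg : HasCompactSupport g) : HasCompactSupport fun p : X × Y => f p.1 * g p.2 :=
  (hf.isCompact.prod hg.isCompact).of_isClosed_subset (isClosed_tsupport _) <|
    closure_minimal
      (fun _ hp => ⟨subset_tsupport f (left_ne_zero_of_mul hp),
        subset_tsupport g (right_ne_zero_of_mul hp)⟩)
      ((isClosed_tsupport f).prod (isClosed_tsupport g))

section Group

variable {G R : Type*} [TopologicalSpace G] [AddGroup G] [IsTopologicalAddGroup G]
  [MulZeroClass R] {f g : G → R}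

lemma hasCompactSupport_mul_comp_add (hf : HasCompactSupport f) (hg : HasCompactSupport g) :
    HasCompactSupport fun p : G × G => f p.1 * g (p.1 + p.2) :=
  (hasCompactSupport_mul_prod hf hg).comp_homeomorph (Homeomorph.shearAddRight G)

lemma hasCompactSupport_mul_comp_sub (hf : HasCompactSupport f) (hg : HasCompactSupport g) :
    HasCompactSupport fun p : G × G => f p.1 * g (p.1 - p.2) := by
  simp only [sub_eq_add_neg]
  exact (hasCompactSupport_mul_comp_add hf hg).comp_homeomorph
    ((Homeomorph.refl G).prodCongr (Homeomorph.neg G))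

end Group

variable {𝕜 X Y : Type*} [RCLike 𝕜] [MeasurableSpace X] [MeasurableSpace Y] {μ : Measure X}
  {ν : Measure Y} {f : X → 𝕜} {k : Y → 𝕜} {g : X → Y → 𝕜}

lemma integrable_mul_mul_of_hasCompactSupport [TopologicalSpace X] [TopologicalSpace Y]
    [T2Space X] [T2Space Y] [OpensMeasurableSpace (X × Y)] [IsLocallyFiniteMeasure μ] [SFinite μ]
    [SFinite ν] (hk : LocallyIntegrable k ν) (hcont : Continuous fun p : X × Y => f p.1 * g p.1 p.2)
    (hcs : HasCompactSupport fun p : X × Y => f p.1 * g p.1 p.2) :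
    Integrable (fun p : X × Y => f p.1 * k p.2 * g p.1 p.2) (μ.prod ν) := by
  refine ((locallyIntegrable_comp_snd hk).integrable_smul_left_of_hasCompactSupport
    hcont hcs).congr (.of_forall fun p => ?_)
  simp only [smul_eq_mul]
  ring

lemma integral_integral_mul_mul_swap [SFinite μ] [SFinite ν]
    (h : Integrable (fun p : X × Y => f p.1 * k p.2 * g p.1 p.2) (μ.prod ν)) :
    ∫ x, ∫ y, f x * k y * g x y ∂ν ∂μ = ∫ y, k y * ∫ x, f x * g x y ∂μ ∂ν := by
  rw [integral_integral_swap h]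
  simp only [mul_comm (f _), mul_assoc, integral_const_mul]

end Fubini

section Tail

variable {𝕜 : Type*} [RCLike 𝕜] {μ : Measure ℝ} [SFinite μ] {k : ℝ → 𝕜} {n : ℕ} {f : ℝ → 𝕜}

lemma integral_mul_iteratedDeriv_add_eq_neg (hn : Odd n) (hf : ContDiff ℝ n f)
    (hsupp : HasCompactSupport f) (τ : ℝ) :
    ∫ t, f t * iteratedDeriv n f (t + τ) = -∫ t, f t * iteratedDeriv n f (t - τ) := by
  rw [integral_mul_iteratedDeriv_add hf hf hsupp, hn.neg_one_pow, neg_one_mul]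
  simp only [mul_comm (f _)]

lemma integrable_mul_mul_iteratedDeriv_add (hf : ContDiff ℝ n f) (hsupp : HasCompactSupport f)
    (hk : LocallyIntegrable k μ) :
    Integrable (fun p : ℝ × ℝ => f p.1 * k p.2 * iteratedDeriv n f (p.1 + p.2))
      (volume.prod μ) :=
  integrable_mul_mul_of_hasCompactSupport (g := fun t τ => iteratedDeriv n f (t + τ)) hk
    (by fun_prop) (hasCompactSupport_mul_comp_add hsupp (hasCompactSupport_iteratedDeriv hsupp n))

lemma integrable_mul_mul_iteratedDeriv_sub (hf : ContDiff ℝ n f) (hsupp : HasCompactSupport f)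
    (hk : LocallyIntegrable k μ) :
    Integrable (fun p : ℝ × ℝ => f p.1 * k p.2 * iteratedDeriv n f (p.1 - p.2))
      (volume.prod μ) :=
  integrable_mul_mul_of_hasCompactSupport (g := fun t τ => iteratedDeriv n f (t - τ)) hk
    (by fun_prop) (hasCompactSupport_mul_comp_sub hsupp (hasCompactSupport_iteratedDeriv hsupp n))

lemma integral_integral_mul_mul_iteratedDeriv_add_eq_neg (hn : Odd n) (hf : ContDiff ℝ n f)
    (hsupp : HasCompactSupport f) (hk : LocallyIntegrable k μ) :
    ∫ t, ∫ τ, f t * k τ * iteratedDeriv n f (t + τ) ∂μ =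
      -∫ t, ∫ τ, f t * k τ * iteratedDeriv n f (t - τ) ∂μ := by
  calc ∫ t, ∫ τ, f t * k τ * iteratedDeriv n f (t + τ) ∂μ
      = ∫ τ, k τ * (∫ t, f t * iteratedDeriv n f (t + τ)) ∂μ :=
        integral_integral_mul_mul_swap (g := fun t τ => iteratedDeriv n f (t + τ))
          (integrable_mul_mul_iteratedDeriv_add hf hsupp hk)
    _ = -∫ τ, k τ * (∫ t, f t * iteratedDeriv n f (t - τ)) ∂μ := by
        simp only [integral_mul_iteratedDeriv_add_eq_neg hn hf hsupp, mul_neg, integral_neg]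
    _ = -∫ t, ∫ τ, f t * k τ * iteratedDeriv n f (t - τ) ∂μ := by
        rw [integral_integral_mul_mul_swap (g := fun t τ => iteratedDeriv n f (t - τ))
          (integrable_mul_mul_iteratedDeriv_sub hf hsupp hk)]

theorem tail_action_time_symmetric_general (hn : Odd n) (hf : ContDiff ℝ n f)
    (hsupp : HasCompactSupport f) (hk : LocallyIntegrable k μ) :
    (∫ t, ∫ τ, f t * k τ * (iteratedDeriv n f (t - τ) + iteratedDeriv n f (t + τ)) ∂μ) = 0 ∧
    (∫ t, f t * ∫ τ, k τ * iteratedDeriv n f (t - τ) ∂μ) =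
      (1 / 2) * ∫ t, f t * ∫ τ,
        k τ * (iteratedDeriv n f (t - τ) - iteratedDeriv n f (t + τ)) ∂μ := by
  have hret := integrable_mul_mul_iteratedDeriv_sub hf hsupp hk
  have hadv := integrable_mul_mul_iteratedDeriv_add hf hsupp hk
  have hanti := integral_integral_mul_mul_iteratedDeriv_add_eq_neg hn hf hsupp hk
  simp only [← integral_const_mul (f _), ← mul_assoc, mul_add, mul_sub]
  constructor
  · rw [integral_integral_add hret hadv, hanti, add_neg_cancel]
  · rw [integral_integral_sub hret hadv, hanti]
    ring

end Tail

/-- The 4PN tail term in the Fokker action is manifestly time-symmetric: the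
time-antisymmetric (advanced-plus-retarded) part integrates to zero, and equivalently
the retarded-only tail double integral equals its time-symmetrized form. -/
theorem tail_action_time_symmetric
    (f : ℝ → ℝ) (hf : ContDiff ℝ (⊤ : ℕ∞) f) (hsupp : HasCompactSupport f)
    (τ₀ : ℝ) (hτ₀ : 0 < τ₀) :
    (∫ t : ℝ, ∫ τ in Ioi (0 : ℝ),
        f t * Real.log (τ / τ₀) *
          (iteratedDeriv 7 f (t - τ) + iteratedDeriv 7 f (t + τ))) = 0 ∧
    (∫ t : ℝ, f t * ∫ τ in Ioi (0 : ℝ),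
        Real.log (τ / τ₀) * iteratedDeriv 7 f (t - τ)) =
      (1 / 2) * ∫ t : ℝ, f t * ∫ τ in Ioi (0 : ℝ),
        Real.log (τ / τ₀) *
          (iteratedDeriv 7 f (t - τ) - iteratedDeriv 7 f (t + τ)) :=
  tail_action_time_symmetric_general (n := 7) (by decide)
    (contDiff_infty.1 hf 7) hsupp
    ((locallyIntegrable_log_comp fun _ => by fun_prop).mono_measure Measure.restrict_le_self)
end

section
/- For all real Ω > 0 and τ₀ > 0, the Abel-regularized log–sine integral satisfies lim_{ε→0⁺} ∫₀^∞ e^{−ετ} log(τ/τ₀) sin(Ωτ) dτ = −(γ + log(Ω τ₀))/Ω, where γ is the Euler–Mascheroni constant and each integral on the left converges absolutely for every ε > 0. -/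
open MeasureTheory Set Filter

/-!
Since `e^{-ετ} sin (Ωτ)` is the imaginary part of `e^{-zτ}` at `z = ε - iΩ`, the regularized
integral is the imaginary part of the Laplace transform of `log (τ / τ₀)` there. For `0 < re z`
this transform is `-(γ + log (z τ₀)) / z`: rescaling reduces it to `τ₀ = 1`, where it is the
derivative at `s = 1` of `∫₀^∞ t^{s-1} e^{-zt} dt = z^{-s} Γ(s)`, an identity that extends from
positive `z` to the half-plane by analytic continuation. The closed form is continuous at
`z = -iΩ`, which is off the branch cut, and there its imaginary part involves only the real part
`log (Ω τ₀)` of the logarithm.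
-/

open Topology

section LaplaceTransform

variable {E : Type*} [NormedAddCommGroup E] [NormedSpace ℂ E]

/-- Absolute convergence of the Laplace integral of `f` at `z`. -/
def LaplaceConvergent (f : ℝ → E) (z : ℂ) : Prop :=
  IntegrableOn (fun t : ℝ => Complex.exp (-(z * t)) • f t) (Ioi 0)

/-- The one-sided Laplace transform `z ↦ ∫₀^∞ e^{-zt} f(t) dt`, with the value `0` where the
integral does not converge absolutely. -/
noncomputable def laplaceTransform (f : ℝ → E) (z : ℂ) : E :=
  ∫ t in Ioi (0 : ℝ), Complex.exp (-(z * t)) • f t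

theorem LaplaceConvergent.comp_div {f : ℝ → E} {z : ℂ} {a : ℝ} (ha : 0 < a)
    (hf : LaplaceConvergent f (z * a)) : LaplaceConvergent (fun t => f (t / a)) z := by
  rw [LaplaceConvergent, ← mul_zero a, ← integrableOn_Ioi_comp_mul_left_iff _ _ ha]
  simpa [LaplaceConvergent, mul_div_cancel_left₀ _ ha.ne', mul_assoc] using hf

theorem laplaceTransform_comp_div (f : ℝ → E) (z : ℂ) {a : ℝ} (ha : 0 < a) :
    laplaceTransform (fun t => f (t / a)) z = a • laplaceTransform f (z * a) := by
  have h := integral_comp_mul_left_Ioi (fun t : ℝ => Complex.exp (-(z * t)) • f (t / a)) 0 ha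
  rw [mul_zero, ← inv_smul_eq_iff₀ (inv_ne_zero ha.ne'), inv_inv] at h
  simpa [laplaceTransform, mul_div_cancel_left₀ _ ha.ne', mul_assoc] using h.symm

theorem norm_mul_cexp_neg_mul_le {a b t : ℝ} {z : ℂ} (hab : a < b) (hbz : b ≤ z.re) (ht : 0 ≤ t) :
    ‖t * Complex.exp (-(z * t))‖ ≤ (b - a)⁻¹ * ‖Complex.exp (-(a * t))‖ := by
  have hlin : (b - a) * t ≤ Real.exp ((b - a) * t) :=
    (lt_add_one _).le.trans (Real.add_one_le_exp _)
  rw [inv_mul_eq_div, le_div_iff₀' (sub_pos.2 hab)]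
  calc (b - a) * ‖t * Complex.exp (-(z * t))‖ = (b - a) * t * Real.exp (-(z.re * t)) := by
        simp [Complex.norm_exp, abs_of_nonneg ht, mul_assoc]
    _ ≤ Real.exp ((b - a) * t) * Real.exp (-(b * t)) := by gcongr
    _ = ‖Complex.exp (-(a * t))‖ := by
        rw [← Real.exp_add, Complex.norm_exp]
        simp only [Complex.neg_re, Complex.re_mul_ofReal, Complex.ofReal_re]
        ring_nf

theorem differentiableOn_laplaceTransform {f : ℝ → E} {c : ℝ}
    (hf : ∀ z : ℂ, c < z.re → LaplaceConvergent f z) :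
    DifferentiableOn ℂ (laplaceTransform f) {z | c < z.re} := by
  intro z hz
  obtain ⟨b, hcb, hbz⟩ := exists_between (show c < z.re from hz)
  obtain ⟨a, hca, hab⟩ := exists_between hcb
  have hnhds : {w : ℂ | b < w.re} ∈ 𝓝 z := (Complex.isOpen_re_gt b).mem_nhds hbz
  have hmeas : AEStronglyMeasurable
      (fun t : ℝ => -(t : ℂ) • Complex.exp (-(z * t)) • f t) (volume.restrict (Ioi 0)) :=
    (by fun_prop : Continuous fun t : ℝ => -(t : ℂ)).aestronglyMeasurable.smul (hf z hz).1
  have hbound : ∀ᵐ t : ℝ ∂volume.restrict (Ioi 0), ∀ w ∈ {w : ℂ | b < w.re},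
      ‖-(t : ℂ) • Complex.exp (-(w * t)) • f t‖ ≤
        (b - a)⁻¹ * ‖Complex.exp (-(a * t)) • f t‖ := by
    filter_upwards [ae_restrict_mem measurableSet_Ioi] with t ht w hw
    rw [neg_smul, norm_neg, smul_smul, norm_smul, norm_smul, ← mul_assoc]
    gcongr
    exact norm_mul_cexp_neg_mul_le hab (le_of_lt hw) (le_of_lt ht)
  have hderiv (t : ℝ) (w : ℂ) : HasDerivAt (fun w : ℂ => Complex.exp (-(w * t)) • f t)
      (-(t : ℂ) • Complex.exp (-(w * t)) • f t) w := by
    have hlin : HasDerivAt (fun w : ℂ => -(w * t)) (-(t : ℂ)) w := by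
      simpa using ((hasDerivAt_id w).mul_const (t : ℂ)).fun_neg
    simpa only [smul_smul, mul_comm] using hlin.cexp.smul_const (f t)
  have hint : Integrable (fun t : ℝ => (b - a)⁻¹ * ‖Complex.exp (-(a * t)) • f t‖)
      (volume.restrict (Ioi 0)) := (hf a (by simpa using hca)).norm.const_mul _
  exact (hasDerivAt_integral_of_dominated_loc_of_deriv_le hnhds
    (eventually_of_mem hnhds fun w hw => (hf w (hcb.trans hw)).1) (hf z hz) hmeas hbound hint
    (ae_of_all _ fun t w _ => hderiv t w)).2.differentiableAt.differentiableWithinAt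

theorem eqOn_re_gt_of_eq_ofReal [CompleteSpace E] {f g : ℂ → E} {c : ℝ}
    (hf : DifferentiableOn ℂ f {z | c < z.re}) (hg : DifferentiableOn ℂ g {z | c < z.re})
    (hfg : ∀ x : ℝ, c < x → f x = g x) : EqOn f g {z | c < z.re} := by
  have hopen : IsOpen {z : ℂ | c < z.re} := Complex.isOpen_re_gt c
  have hcoe : Tendsto ((↑) : ℝ → ℂ) (𝓝[≠] (c + 1)) (𝓝[≠] ((c + 1 : ℝ) : ℂ)) :=
    Complex.continuous_ofReal.continuousWithinAt.tendsto_nhdsWithin fun x hx => by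
      simpa only [mem_compl_iff, mem_singleton_iff, Complex.ofReal_inj] using hx
  have hmem : ((c + 1 : ℝ) : ℂ) ∈ {z : ℂ | c < z.re} := by simp
  refine (hf.analyticOnNhd hopen).eqOn_of_preconnected_of_frequently_eq (hg.analyticOnNhd hopen)
    (convex_halfSpace_re_gt c).isPreconnected hmem (hcoe.frequently (Eventually.frequently ?_))
  filter_upwards [nhdsWithin_le_nhds (lt_mem_nhds (lt_add_one c))] with x hx using hfg x hx

theorem LaplaceConvergent.integrableOn_exp_mul_sin {f : ℝ → ℝ} {ε Ω : ℝ}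
    (hf : LaplaceConvergent (fun t => (f t : ℂ)) (ε - Ω * Complex.I)) :
    IntegrableOn (fun t => Real.exp (-ε * t) * f t * Real.sin (Ω * t)) (Ioi 0) := by
  refine (Integrable.im hf).congr (ae_of_all _ fun t => ?_)
  simp [Complex.exp_im, mul_right_comm]

theorem LaplaceConvergent.integral_exp_mul_sin {f : ℝ → ℝ} {ε Ω : ℝ}
    (hf : LaplaceConvergent (fun t => (f t : ℂ)) (ε - Ω * Complex.I)) :
    ∫ t in Ioi (0 : ℝ), Real.exp (-ε * t) * f t * Real.sin (Ω * t) =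
      (laplaceTransform (fun t => (f t : ℂ)) (ε - Ω * Complex.I)).im := by
  rw [laplaceTransform, ← RCLike.im_to_complex, ← integral_im hf]
  refine integral_congr_ae (ae_of_all _ fun t => ?_)
  simp [Complex.exp_im, mul_right_comm]

end LaplaceTransform

section GammaIntegral

variable {z s : ℂ}

theorem isBigO_cexp_neg_mul_atTop (hz : 0 < z.re) (a : ℝ) :
    (fun t : ℝ => Complex.exp (-(z * t))) =O[atTop] (· ^ a) := by
  rw [← Asymptotics.isBigO_norm_left]
  simpa [Complex.norm_exp] using (isLittleO_exp_neg_mul_rpow_atTop hz a).isBigO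

theorem isBigO_cexp_neg_mul_nhdsGT_zero (z : ℂ) :
    (fun t : ℝ => Complex.exp (-(z * t))) =O[𝓝[>] 0] (· ^ (-0 : ℝ)) := by
  have hcont : Continuous fun t : ℝ => Complex.exp (-(z * t)) := by fun_prop
  simpa using (hcont.tendsto 0).isBigO_one ℝ |>.mono nhdsWithin_le_nhds

theorem locallyIntegrableOn_cexp_neg_mul (z : ℂ) (S : Set ℝ) :
    LocallyIntegrableOn (fun t : ℝ => Complex.exp (-(z * t))) S := by
  have hcont : Continuous fun t : ℝ => Complex.exp (-(z * t)) := by fun_prop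
  exact hcont.locallyIntegrable.locallyIntegrableOn S

theorem laplaceConvergent_cpow (hz : 0 < z.re) (hs : 0 < s.re) :
    LaplaceConvergent (fun t : ℝ => (t : ℂ) ^ (s - 1)) z := by
  have h := mellinConvergent_of_isBigO_rpow (locallyIntegrableOn_cexp_neg_mul z _)
    (isBigO_cexp_neg_mul_atTop hz _) (lt_add_one s.re) (isBigO_cexp_neg_mul_nhdsGT_zero z) hs
  simpa only [MellinConvergent, LaplaceConvergent, smul_eq_mul, mul_comm] using h

theorem laplaceTransform_cpow (hz : 0 < z.re) (hs : 0 < s.re) :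
    laplaceTransform (fun t : ℝ => (t : ℂ) ^ (s - 1)) z = z ^ (-s) * Complex.Gamma s := by
  refine eqOn_re_gt_of_eq_ofReal (g := fun z => z ^ (-s) * Complex.Gamma s)
    (differentiableOn_laplaceTransform fun w hw => laplaceConvergent_cpow hw hs)
    (fun w hw => ?_) (fun r hr => ?_) hz
  · exact ((differentiableAt_id.cpow_const (Or.inl hw)).mul_const _).differentiableWithinAt
  · have harg : (r : ℂ).arg ≠ Real.pi := Complex.slitPlane_arg_ne_pi (Or.inl hr)
    rw [Complex.cpow_neg, ← Complex.inv_cpow _ _ harg, ← one_div,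
      ← Complex.integral_cpow_mul_exp_neg_mul_Ioi hs hr]
    simp only [laplaceTransform, smul_eq_mul, mul_comm]

theorem hasMellin_log_smul_cexp_neg_mul (hz : 0 < z.re) (hs : 0 < s.re) :
    HasMellin (fun t : ℝ => Real.log t • Complex.exp (-(z * t))) s
      (z ^ (-s) * (deriv Complex.Gamma s - Complex.log z * Complex.Gamma s)) := by
  have hz0 : z ≠ 0 := by rintro rfl; simp at hz
  obtain ⟨hconv, hderiv⟩ := mellin_hasDerivAt_of_isBigO_rpow (locallyIntegrableOn_cexp_neg_mul z _)
    (isBigO_cexp_neg_mul_atTop hz _) (lt_add_one s.re) (isBigO_cexp_neg_mul_nhdsGT_zero z) hs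
  refine ⟨hconv, ?_⟩
  have hGamma : HasDerivAt Complex.Gamma (deriv Complex.Gamma s) s :=
    (Complex.differentiableAt_Gamma s fun m hm =>
      not_le_of_gt hs (by simp [hm])).hasDerivAt
  have hclosed : HasDerivAt (fun s => z ^ (-s) * Complex.Gamma s)
      (z ^ (-s) * (deriv Complex.Gamma s - Complex.log z * Complex.Gamma s)) s :=
    (((hasDerivAt_id s).neg.const_cpow (Or.inl hz0)).mul hGamma).congr_deriv (by simp; ring)
  have heq : mellin (fun t : ℝ => Complex.exp (-(z * t))) =ᶠ[𝓝 s]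
      fun s => z ^ (-s) * Complex.Gamma s := by
    filter_upwards [(Complex.isOpen_re_gt 0).mem_nhds hs] with w hw
    simpa only [mellin, laplaceTransform, smul_eq_mul, mul_comm] using laplaceTransform_cpow hz hw
  exact hderiv.unique (hclosed.congr_of_eventuallyEq heq)

end GammaIntegral

section LaplaceLog

variable {z : ℂ}

theorem laplaceConvergent_log (hz : 0 < z.re) :
    LaplaceConvergent (fun t => (Real.log t : ℂ)) z := by
  simpa [MellinConvergent, LaplaceConvergent, mul_comm] using
    (hasMellin_log_smul_cexp_neg_mul hz (s := 1) (by simp)).1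

theorem laplaceTransform_log (hz : 0 < z.re) :
    laplaceTransform (fun t => (Real.log t : ℂ)) z =
      -(Real.eulerMascheroniConstant + Complex.log z) / z := by
  have h := (hasMellin_log_smul_cexp_neg_mul hz (s := 1) (by simp)).2
  rw [Complex.hasDerivAt_Gamma_one.deriv, Complex.Gamma_one, Complex.cpow_neg_one] at h
  calc laplaceTransform (fun t => (Real.log t : ℂ)) z
      = mellin (fun t : ℝ => Real.log t • Complex.exp (-(z * t))) 1 := by
        simp [mellin, laplaceTransform, mul_comm]
    _ = -(Real.eulerMascheroniConstant + Complex.log z) / z := by rw [h]; ring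

variable {a : ℝ}

theorem laplaceConvergent_log_div (ha : 0 < a) (hz : 0 < z.re) :
    LaplaceConvergent (fun t => (Real.log (t / a) : ℂ)) z :=
  (laplaceConvergent_log (by simpa using mul_pos hz ha)).comp_div ha

theorem laplaceTransform_log_div (ha : 0 < a) (hz : 0 < z.re) :
    laplaceTransform (fun t => (Real.log (t / a) : ℂ)) z =
      -(Real.eulerMascheroniConstant + Complex.log (z * a)) / z := by
  have ha0 : (a : ℂ) ≠ 0 := Complex.ofReal_ne_zero.2 ha.ne'
  rw [laplaceTransform_comp_div (fun t => (Real.log t : ℂ)) z ha,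
    laplaceTransform_log (by simpa using mul_pos hz ha), Complex.real_smul,
    mul_div_assoc', mul_comm z, mul_div_mul_left _ _ ha0]

end LaplaceLog

theorem continuousAt_add_log_mul_div (c : ℂ) {a : ℝ} (ha : 0 < a) {z : ℂ}
    (hz : z ∈ Complex.slitPlane) :
    ContinuousAt (fun w : ℂ => -(c + Complex.log (w * a)) / w) z := by
  have hza : z * a ∈ Complex.slitPlane := by
    simpa [Complex.mem_slitPlane_iff, ha, ha.ne'] using hz
  exact ((continuousAt_id.mul_const (a : ℂ)).clog hza |>.const_add c).neg.div continuousAt_id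
    (Complex.slitPlane_ne_zero hz)

theorem im_neg_add_log_div_neg_mul_I (c Ω a : ℝ) :
    (-(c + Complex.log (-(Ω * Complex.I) * a)) / -(Ω * Complex.I)).im =
      -(c + Real.log (Ω * a)) / Ω := by
  have him (w : ℂ) : (-w / -(Ω * Complex.I)).im = -w.re / Ω := by
    rw [neg_div_neg_eq, ← div_div, Complex.div_I]
    simp [neg_div]
  rw [him, Complex.add_re, Complex.log_re]
  simp [← abs_mul]

/-- The Abel-regularized log–sine integral:
`lim_{ε→0⁺} ∫₀^∞ e^{-ετ} log(τ/τ₀) sin(Ωτ) dτ = -(γ + log(Ω τ₀))/Ω`, each integral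
converging absolutely for every `ε > 0`. -/
theorem abel_regularized_log_sine_integral (Ω τ₀ : ℝ) (hΩ : 0 < Ω) (hτ₀ : 0 < τ₀) :
    (∀ ε : ℝ, 0 < ε →
      IntegrableOn (fun τ : ℝ => Real.exp (-ε * τ) * Real.log (τ / τ₀) * Real.sin (Ω * τ))
        (Ioi 0) volume) ∧
    Tendsto
      (fun ε : ℝ =>
        ∫ τ in Ioi (0 : ℝ), Real.exp (-ε * τ) * Real.log (τ / τ₀) * Real.sin (Ω * τ))
      (nhdsWithin 0 (Ioi 0))
      (nhds (-(Real.eulerMascheroniConstant + Real.log (Ω * τ₀)) / Ω)) := by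
  have hre {ε : ℝ} (hε : 0 < ε) : 0 < (ε - Ω * Complex.I).re := by simpa using hε
  refine ⟨fun ε hε => (laplaceConvergent_log_div hτ₀ (hre hε)).integrableOn_exp_mul_sin, ?_⟩
  have hpath : Tendsto (fun ε : ℝ => ε - Ω * Complex.I) (𝓝[>] 0) (𝓝 (-(Ω * Complex.I))) := by
    have hcont : Continuous fun ε : ℝ => ε - Ω * Complex.I := by fun_prop
    simpa using (hcont.tendsto 0).mono_left nhdsWithin_le_nhds
  have hslit : -(Ω * Complex.I) ∈ Complex.slitPlane := Or.inr (by simpa using hΩ.ne')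
  rw [← im_neg_add_log_div_neg_mul_I]
  refine ((Complex.continuous_im.tendsto _).comp
    ((continuousAt_add_log_mul_div _ hτ₀ hslit).tendsto.comp hpath)).congr' ?_
  filter_upwards [self_mem_nhdsWithin] with ε hε
  rw [(laplaceConvergent_log_div hτ₀ (hre hε)).integral_exp_mul_sin,
    laplaceTransform_log_div hτ₀ (hre hε), Function.comp_apply, Function.comp_apply]
end

section
/- Let y₁, y₂ ∈ ℝ³ and, for x ∈ ℝ³, set r₁ = ‖x − y₁‖, r₂ = ‖x − y₂‖, r₁₂ = ‖y₁ − y₂‖ (Euclidean norms). Then for every x with x ≠ y₁ and x ≠ y₂, the function g(x) = log(r₁ + r₂ + r₁₂) satisfies Δg(x) = 1/(r₁ r₂), where Δ is the Euclidean Laplacian on ℝ³. -/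
/-!
On an `n`-dimensional Euclidean space the norm has unit gradient and `Δ ‖·‖ = (n - 1) / ‖·‖`, so
with `r₁ = ‖x - y₁‖`, `r₂ = ‖x - y₂‖`, `d = ‖y₁ - y₂‖` and `S = r₁ + r₂ + d` one has
`Δ S = (n - 1) (r₁ + r₂) / (r₁ r₂)`. By the law of cosines, the sum of the two unit vectors
pointing from `y₁` and `y₂` to `x` has squared length
`‖∇ S‖² = ((r₁ + r₂)² - d²) / (r₁ r₂) = S (r₁ + r₂ - d) / (r₁ r₂)`. One factor `S` therefore cancels
in `Δ (log S) = Δ S / S - ‖∇ S‖² / S²`, leaving `((n - 2) (r₁ + r₂) + d) / (r₁ r₂ S)`, and for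
`n = 3` the numerator is `S` again.
-/

open MeasureTheory

/-- The Euclidean Laplacian of `f : ℝ³ → ℝ`, as the sum of the second partial
derivatives along the standard coordinate directions. -/
noncomputable def laplacian (f : EuclideanSpace ℝ (Fin 3) → ℝ)
    (x : EuclideanSpace ℝ (Fin 3)) : ℝ :=
  ∑ i : Fin 3,
    fderiv ℝ (fun y => fderiv ℝ f y (EuclideanSpace.single i 1)) x
      (EuclideanSpace.single i 1)

open Module
open scoped Gradient InnerProductSpace Laplacian Topology

section NormedSpace

variable {E F : Type*} [NormedAddCommGroup E] [NormedSpace ℝ E]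
  [NormedAddCommGroup F] [NormedSpace ℝ F]

lemma fderiv_fderiv_apply {f : E → F} {x : E} (hf : ContDiffAt ℝ 2 f x) (v w : E) :
    fderiv ℝ (fderiv ℝ f) x v w = fderiv ℝ (fun z => fderiv ℝ f z w) x v := by
  have hf' : DifferentiableAt ℝ (fderiv ℝ f) x :=
    (hf.fderiv_right (m := 1) (by norm_num)).differentiableAt one_ne_zero
  simp [fderiv_clm_apply hf' (differentiableAt_const w)]

lemma fderiv_fderiv_comp_apply {φ : ℝ → F} {f : E → ℝ} {x : E}
    (hφ : ContDiffAt ℝ 2 φ (f x)) (hf : ContDiffAt ℝ 2 f x) (v w : E) :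
    fderiv ℝ (fderiv ℝ (φ ∘ f)) x v w =
      (fderiv ℝ f x v * fderiv ℝ f x w) • deriv (deriv φ) (f x) +
        fderiv ℝ (fderiv ℝ f) x v w • deriv φ (f x) := by
  have fderiv_comp_eq : (fun z => fderiv ℝ (φ ∘ f) z w) =ᶠ[𝓝 x]
      (fun z => fderiv ℝ f z w) • (deriv φ ∘ f) := by
    filter_upwards [hf.eventually (by simp),
      hf.continuousAt.eventually (hφ.eventually (by simp))] with z hfz hφz
    simp [fderiv_comp z (hφz.differentiableAt two_ne_zero) (hfz.differentiableAt two_ne_zero)]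
  have hf' : DifferentiableAt ℝ (fun z => fderiv ℝ f z w) x :=
    ((hf.fderiv_right (m := 1) (by norm_num)).clm_apply contDiffAt_const).differentiableAt
      one_ne_zero
  have hφ' : DifferentiableAt ℝ (deriv φ) (f x) :=
    (hφ.derivWithin (m := 1) (by norm_num)).differentiableAt one_ne_zero
  have hfx : DifferentiableAt ℝ f x := hf.differentiableAt two_ne_zero
  rw [fderiv_fderiv_apply (hφ.comp x hf), fderiv_comp_eq.fderiv_eq,
    fderiv_smul hf' (hφ'.comp x hfx), fderiv_comp x hφ' hfx, fderiv_fderiv_apply hf]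
  simp [smul_smul, mul_comm]

end NormedSpace

section InnerProductSpace

variable {E : Type*} [NormedAddCommGroup E] [InnerProductSpace ℝ E]

lemma hasGradientAt_norm [CompleteSpace E] {x : E} (hx : x ≠ 0) :
    HasGradientAt (‖·‖) (‖x‖⁻¹ • x) x := by
  have hx' : ‖x‖ ≠ 0 := norm_ne_zero_iff.mpr hx
  have h := (hasStrictFDerivAt_norm_sq x).hasFDerivAt.sqrt (pow_ne_zero 2 hx')
  simp only [Real.sqrt_sq (norm_nonneg _)] at h
  refine hasGradientAt_iff_hasFDerivAt.mpr (h.congr_fderiv ?_)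
  ext v
  simp only [smul_apply, coe_innerSL_apply, nsmul_eq_mul, Nat.cast_ofNat,
    smul_eq_mul, map_smul, InnerProductSpace.toDual_apply_apply]
  field_simp

lemma contDiffAt_norm_sub {n : WithTop ℕ∞} {x y : E} (h : x ≠ y) :
    ContDiffAt ℝ n (fun z => ‖z - y‖) x :=
  (contDiffAt_id.sub contDiffAt_const).norm ℝ (sub_ne_zero.mpr h)

lemma hasGradientAt_norm_sub [CompleteSpace E] {x y : E} (h : x ≠ y) :
    HasGradientAt (fun z => ‖z - y‖) (‖x - y‖⁻¹ • (x - y)) x :=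
  hasGradientAt_iff_hasFDerivAt.mpr <|
    (hasFDerivAt_comp_sub y).mpr (hasGradientAt_norm (sub_ne_zero.mpr h)).hasFDerivAt

lemma norm_inv_norm_smul_add_inv_norm_smul_sq {a b : E} (ha : a ≠ 0) (hb : b ≠ 0) :
    ‖‖a‖⁻¹ • a + ‖b‖⁻¹ • b‖ ^ 2 =
      ((‖a‖ + ‖b‖) ^ 2 - ‖a - b‖ ^ 2) / (‖a‖ * ‖b‖) := by
  have ha' := norm_ne_zero_iff.mpr ha
  have hb' := norm_ne_zero_iff.mpr hb
  simp only [norm_add_sq_real, norm_sub_sq_real, norm_smul, norm_inv, norm_norm,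
    real_inner_smul_left, real_inner_smul_right]
  field_simp
  ring

variable [FiniteDimensional ℝ E] {F : Type*} [NormedAddCommGroup F] [NormedSpace ℝ F]

lemma laplacian_eq_sum_fderiv_fderiv {ι : Type*} [Fintype ι] (v : OrthonormalBasis ι ℝ E)
    (f : E → F) (x : E) :
    Δ f x = ∑ i, fderiv ℝ (fderiv ℝ f) x (v i) (v i) := by
  simp [InnerProductSpace.laplacian_eq_iteratedFDeriv_orthonormalBasis f v,
    iteratedFDeriv_two_apply]

lemma laplacian_comp_sub_const (f : E → F) (x y : E) :
    Δ (fun z => f (z - y)) x = Δ f (x - y) := by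
  simp [InnerProductSpace.laplacian_eq_iteratedFDeriv_stdOrthonormalBasis,
    iteratedFDeriv_comp_sub]

lemma laplacian_comp {φ : ℝ → F} {f : E → ℝ} {x : E}
    (hφ : ContDiffAt ℝ 2 φ (f x)) (hf : ContDiffAt ℝ 2 f x) :
    Δ (φ ∘ f) x = ‖∇ f x‖ ^ 2 • deriv (deriv φ) (f x) + Δ f x • deriv φ (f x) := by
  let v := stdOrthonormalBasis ℝ E
  simp only [laplacian_eq_sum_fderiv_fderiv v, fderiv_fderiv_comp_apply hφ hf, ← pow_two,
    Finset.sum_add_distrib, ← Finset.sum_smul, ← inner_gradient_left, v.sum_sq_inner_left]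

lemma laplacian_norm_sq (x : E) : Δ (fun z : E => ‖z‖ ^ 2) x = 2 * finrank ℝ E := by
  have fderiv_eq : fderiv ℝ (fun z : E => ‖z‖ ^ 2) = (2 • innerSL ℝ : E →L[ℝ] E →L[ℝ] ℝ) :=
    fderiv_norm_sq
  have second_deriv (v : E) : fderiv ℝ (fderiv ℝ fun z : E => ‖z‖ ^ 2) x v v = 2 * ‖v‖ ^ 2 := by
    rw [fderiv_eq, ContinuousLinearMap.fderiv, two_smul, two_mul, ← real_inner_self_eq_norm_sq]
    rfl
  simp [laplacian_eq_sum_fderiv_fderiv (stdOrthonormalBasis ℝ E), second_deriv, mul_comm]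

lemma laplacian_norm {x : E} (hx : x ≠ 0) :
    Δ (fun z : E => ‖z‖) x = (finrank ℝ E - 1) / ‖x‖ := by
  have hx' : ‖x‖ ≠ 0 := norm_ne_zero_iff.mpr hx
  have unit_gradient : ‖∇ (fun z : E => ‖z‖) x‖ = 1 := by
    rw [(hasGradientAt_norm hx).gradient, norm_smul, norm_inv, norm_norm, inv_mul_cancel₀ hx']
  have deriv_sq : deriv (fun t : ℝ => t ^ 2) = fun t => 2 * t := by ext; simp
  have chain_rule := laplacian_comp (φ := fun t => t ^ 2) (f := fun z : E => ‖z‖)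
    (by fun_prop) (contDiffAt_norm ℝ hx)
  have laplacian_sq : 2 * (finrank ℝ E : ℝ) = 2 + Δ (fun z : E => ‖z‖) x * (2 * ‖x‖) := by
    rw [← laplacian_norm_sq x]
    simpa [Function.comp_def, deriv_sq, deriv_const_mul_field, unit_gradient] using chain_rule
  rw [eq_div_iff hx']
  linarith

lemma laplacian_norm_sub {x y : E} (h : x ≠ y) :
    Δ (fun z => ‖z - y‖) x = (finrank ℝ E - 1) / ‖x - y‖ := by
  rw [laplacian_comp_sub_const (‖·‖), laplacian_norm (sub_ne_zero.mpr h)]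

lemma laplacian_log {f : E → ℝ} {x : E} (hf : ContDiffAt ℝ 2 f x) (hx : f x ≠ 0) :
    Δ (fun z => Real.log (f z)) x = Δ f x / f x - ‖∇ f x‖ ^ 2 / f x ^ 2 := by
  have h := laplacian_comp (Real.contDiffAt_log.mpr hx) hf
  simp only [Real.deriv_log', deriv_inv, smul_eq_mul] at h
  refine h.trans ?_
  ring

end InnerProductSpace

section FockKernel

variable {E : Type*} [NormedAddCommGroup E]

/-- The perimeter `r₁ + r₂ + r₁₂` of the triangle with vertices `y₁`, `y₂` and `x`, as a function of
the vertex `x`. Fock's kernel is its logarithm. -/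
noncomputable def trianglePerimeter (y₁ y₂ x : E) : ℝ :=
  ‖x - y₁‖ + ‖x - y₂‖ + ‖y₁ - y₂‖

lemma trianglePerimeter_pos {x y₁ : E} (y₂ : E) (h₁ : x ≠ y₁) : 0 < trianglePerimeter y₁ y₂ x := by
  have := norm_sub_pos_iff.mpr h₁
  unfold trianglePerimeter
  positivity

variable [InnerProductSpace ℝ E] {x y₁ y₂ : E}

lemma contDiffAt_trianglePerimeter {n : WithTop ℕ∞} (h₁ : x ≠ y₁) (h₂ : x ≠ y₂) :
    ContDiffAt ℝ n (trianglePerimeter y₁ y₂) x :=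
  ((contDiffAt_norm_sub h₁).add (contDiffAt_norm_sub h₂)).add contDiffAt_const

lemma contDiffAt_fock_kernel {n : WithTop ℕ∞} (h₁ : x ≠ y₁) (h₂ : x ≠ y₂) :
    ContDiffAt ℝ n (fun z => Real.log (‖z - y₁‖ + ‖z - y₂‖ + ‖y₁ - y₂‖)) x :=
  (contDiffAt_trianglePerimeter h₁ h₂).log (trianglePerimeter_pos y₂ h₁).ne'

lemma hasGradientAt_trianglePerimeter [CompleteSpace E] (h₁ : x ≠ y₁) (h₂ : x ≠ y₂) :
    HasGradientAt (trianglePerimeter y₁ y₂)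
      (‖x - y₁‖⁻¹ • (x - y₁) + ‖x - y₂‖⁻¹ • (x - y₂)) x := by
  rw [hasGradientAt_iff_hasFDerivAt, map_add]
  exact ((hasGradientAt_norm_sub h₁).hasFDerivAt.add
    (hasGradientAt_norm_sub h₂).hasFDerivAt).add_const _

lemma norm_gradient_trianglePerimeter_sq [CompleteSpace E] (h₁ : x ≠ y₁) (h₂ : x ≠ y₂) :
    ‖∇ (trianglePerimeter y₁ y₂) x‖ ^ 2 =
      trianglePerimeter y₁ y₂ x * (‖x - y₁‖ + ‖x - y₂‖ - ‖y₁ - y₂‖) /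
        (‖x - y₁‖ * ‖x - y₂‖) := by
  rw [(hasGradientAt_trianglePerimeter h₁ h₂).gradient,
    norm_inv_norm_smul_add_inv_norm_smul_sq (sub_ne_zero.mpr h₁) (sub_ne_zero.mpr h₂),
    sub_sub_sub_cancel_left, norm_sub_rev y₂, sq_sub_sq, trianglePerimeter]

variable [FiniteDimensional ℝ E]

lemma laplacian_trianglePerimeter (h₁ : x ≠ y₁) (h₂ : x ≠ y₂) :
    Δ (trianglePerimeter y₁ y₂) x =
      (finrank ℝ E - 1) / ‖x - y₁‖ + (finrank ℝ E - 1) / ‖x - y₂‖ := by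
  let r (y z : E) : ℝ := ‖z - y‖
  have contDiffAt_r {y : E} (h : x ≠ y) : ContDiffAt ℝ 2 (r y) x := contDiffAt_norm_sub h
  have contDiffAt_add : ContDiffAt ℝ 2 (r y₁ + r y₂) x := (contDiffAt_r h₁).add (contDiffAt_r h₂)
  have perimeter_eq : trianglePerimeter y₁ y₂ = r y₁ + r y₂ + fun _ => ‖y₁ - y₂‖ := rfl
  rw [perimeter_eq, contDiffAt_add.laplacian_add contDiffAt_const,
    (contDiffAt_r h₁).laplacian_add (contDiffAt_r h₂), laplacian_norm_sub h₁,
    laplacian_norm_sub h₂, InnerProductSpace.laplacian_const, Pi.zero_apply, add_zero]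

theorem laplacian_fock_kernel_general (h₁ : x ≠ y₁) (h₂ : x ≠ y₂) :
    Δ (fun z => Real.log (‖z - y₁‖ + ‖z - y₂‖ + ‖y₁ - y₂‖)) x =
      (1 + (finrank ℝ E - 3) * (‖x - y₁‖ + ‖x - y₂‖) / (‖x - y₁‖ + ‖x - y₂‖ + ‖y₁ - y₂‖)) /
        (‖x - y₁‖ * ‖x - y₂‖) := by
  have hr₁ : ‖x - y₁‖ ≠ 0 := norm_sub_eq_zero_iff.not.mpr h₁
  have hr₂ : ‖x - y₂‖ ≠ 0 := norm_sub_eq_zero_iff.not.mpr h₂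
  have hS := (trianglePerimeter_pos y₂ h₁).ne'
  have laplacian_log_S := laplacian_log (contDiffAt_trianglePerimeter h₁ h₂) hS
  rw [laplacian_trianglePerimeter h₁ h₂, norm_gradient_trianglePerimeter_sq h₁ h₂]
    at laplacian_log_S
  refine laplacian_log_S.trans ?_
  unfold trianglePerimeter at hS ⊢
  field_simp
  ring

end FockKernel

lemma laplacian_eq_innerProductSpace_laplacian {f : EuclideanSpace ℝ (Fin 3) → ℝ}
    {x : EuclideanSpace ℝ (Fin 3)} (hf : ContDiffAt ℝ 2 f x) : laplacian f x = Δ f x := by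
  simp [laplacian, laplacian_eq_sum_fderiv_fderiv (EuclideanSpace.basisFun (Fin 3) ℝ),
    fderiv_fderiv_apply hf]

/-- Fock's elementary kernel `g = log(r₁ + r₂ + r₁₂)` solves `Δg = 1/(r₁ r₂)` away from
the two singular points. -/
theorem laplacian_fock_kernel (y₁ y₂ : EuclideanSpace ℝ (Fin 3)) :
    ∀ x : EuclideanSpace ℝ (Fin 3), x ≠ y₁ → x ≠ y₂ →
      laplacian (fun z => Real.log (‖z - y₁‖ + ‖z - y₂‖ + ‖y₁ - y₂‖)) x =
        1 / (‖x - y₁‖ * ‖x - y₂‖) := by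
  intro x h₁ h₂
  rw [laplacian_eq_innerProductSpace_laplacian (contDiffAt_fock_kernel h₁ h₂),
    laplacian_fock_kernel_general h₁ h₂, finrank_euclideanSpace_fin]
  simp
end
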